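/- arXiv:2603.23143 — 8 statements merged into one kernel-verified Lean document; each statement's English description precedes it below -/
import Mathlib

section
/- Let R be a commutative ring, let A be an n×n matrix over R, let m, s be positive integers with s dividing m, and let b_0, …, b_m ∈ R. Then the Paterson–Stockmeyer nested scheme PS_m(A) = (⋯((Σ_{j=0}^{s} b_{m−j} A^{s−j}) A^s + Σ_{j=1}^{s} b_{m−s−j} A^{s−j}) A^s + ⋯) A^s + Σ_{j=1}^{s} b_{s−j} A^{s−j}, in which the outer multiplication by A^s is applied m/s − 1 times, equals the matrix polynomial P_m(A) = Σ_{i=0}^{m} b_i A^i. -/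
/-- The Paterson–Stockmeyer nested scheme: `PSscheme A b m s ℓ` is the value of the
nesting after `ℓ` outer multiplications by `A^s`.  The innermost level (`ℓ = 0`) is
`Σ_{j=0}^{s} b_{m−j} A^{s−j}`, and each subsequent level multiplies by `A^s` and adds
`Σ_{j=1}^{s} b_{m−ℓs−j} A^{s−j}`. -/
def PSscheme {R : Type*} [CommRing R] {n : ℕ} (A : Matrix (Fin n) (Fin n) R)
    (b : ℕ → R) (m s : ℕ) : ℕ → Matrix (Fin n) (Fin n) R
  | 0 => ∑ j ∈ Finset.range (s + 1), b (m - j) • A ^ (s - j)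
  | ℓ + 1 => PSscheme A b m s ℓ * A ^ s +
      ∑ j ∈ Finset.Icc 1 s, b (m - (ℓ + 1) * s - j) • A ^ (s - j)

theorem PSscheme_invariant {R : Type*} [CommRing R] {n : ℕ}
    (A : Matrix (Fin n) (Fin n) R) (b : ℕ → R) (m s : ℕ) (l : ℕ) (h : (l + 1) * s ≤ m) :
    PSscheme A b m s l =
      ∑ i ∈ Finset.range ((l + 1) * s + 1), b (m - (l + 1) * s + i) • A ^ i := by
  induction l with
  | zero =>
    rw [PSscheme, ← Finset.sum_range_reflect]
    simp only [zero_add, one_mul] at h ⊢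
    refine Finset.sum_congr rfl fun j hj => ?_
    have hj' := Finset.mem_range.mp hj
    congr 2 <;> first | omega | (congr 1; omega)
  | succ l ih =>
    have e : (l + 1 + 1) * s = s + (l + 1) * s := by ring
    rw [e] at h
    rw [PSscheme, ih (by omega), e, add_assoc s, Finset.sum_range_add _ s, add_comm, Finset.sum_mul]
    congr 1
    · rw [← Finset.sum_range_reflect]
      rw [← Finset.Ico_add_one_right_eq_Icc, Finset.sum_Ico_eq_sum_range]
      refine Finset.sum_congr (by simp) fun j hj => ?_
      have hj' := Finset.mem_range.mp hj
      congr 2 <;> first | omega | (congr 1; omega)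
    · refine Finset.sum_congr rfl fun j hj => ?_
      rw [smul_mul_assoc, ← pow_add, add_comm j s]
      congr 2
      omega

theorem paterson_stockmeyer_correct {R : Type*} [CommRing R] {n : ℕ}
    (A : Matrix (Fin n) (Fin n) R) (m s : ℕ) (hm : 0 < m) (hs : 0 < s)
    (hdvd : s ∣ m) (b : ℕ → R) :
    PSscheme A b m s (m / s - 1) = ∑ i ∈ Finset.range (m + 1), b i • A ^ i := by
  have h1 : 0 < m / s := Nat.div_pos (Nat.le_of_dvd hm hdvd) hs
  have h2 : (m / s - 1 + 1) * s = m := by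
    rw [Nat.sub_add_cancel h1, Nat.div_mul_cancel hdvd]
  rw [PSscheme_invariant A b m s _ h2.le, h2]
  simp
end

section
/- For every positive integer m there exists s ∈ {⌊√m⌋, ⌈√m⌉} such that for all positive integers s′, s + ⌈m/s⌉ − 2 ≤ s′ + ⌈m/s′⌉ − 2. In other words, the minimum of the Paterson–Stockmeyer cost function s′ ↦ s′ + ⌈m/s′⌉ − 2 over positive integers s′ is attained at s′ = ⌊√m⌋ or at s′ = ⌈√m⌉. -/
/-- For every positive integer `m` there exists
`s ∈ {⌊√m⌋, ⌈√m⌉}` such that the Paterson–Stockmeyer cost function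
`s′ ↦ s′ + ⌈m/s′⌉ − 2` over positive integers `s′` attains its minimum at `s`. -/
theorem ps_cost_min_at_sqrt (m : ℕ) (hm : 0 < m) :
    ∃ s : ℕ, (s = ⌊Real.sqrt m⌋₊ ∨ s = ⌈Real.sqrt m⌉₊) ∧
      ∀ s' : ℕ, 0 < s' →
        (s : ℤ) + ⌈(m : ℚ) / s⌉ - 2 ≤ (s' : ℤ) + ⌈(m : ℚ) / s'⌉ - 2 := by
  refine ⟨⌈Real.sqrt m⌉₊, Or.inr rfl, ?_⟩
  intro t ht
  have hmR : (0 : ℝ) < m := by exact_mod_cast hm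
  have hsq : Real.sqrt m * Real.sqrt m = m := Real.mul_self_sqrt hmR.le
  have hpos : 0 < Real.sqrt m := Real.sqrt_pos.mpr hmR
  have h1 : Real.sqrt m ≤ ⌈Real.sqrt m⌉₊ := Nat.le_ceil _
  have h2 : (⌈Real.sqrt m⌉₊ : ℝ) < Real.sqrt m + 1 := Nat.ceil_lt_add_one hpos.le
  have hc : 0 < ⌈Real.sqrt m⌉₊ := Nat.ceil_pos.mpr hpos
  generalize ⌈Real.sqrt m⌉₊ = c at *
  have hc1 : (1 : ℝ) ≤ c := by exact_mod_cast hc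
  have hu : (m : ℤ) ≤ c * c := by
    have : (m : ℝ) ≤ c * c := by nlinarith
    exact_mod_cast this
  have hl : ((c : ℤ) - 1) * (c - 1) < m := by
    have : ((c : ℝ) - 1) * (c - 1) < m := by nlinarith
    exact_mod_cast this
  have hcQ : (0 : ℚ) < c := by exact_mod_cast hc
  have htQ : (0 : ℚ) < t := by exact_mod_cast ht
  have key : ∀ z : ℤ, (m : ℤ) ≤ z * c → ⌈(m : ℚ) / c⌉ ≤ z := by
    intro z hz
    rw [Int.ceil_le, div_le_iff₀ hcQ]
    exact_mod_cast hz
  have hd : (m : ℤ) ≤ ⌈(m : ℚ) / t⌉ * t := by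
    have := Int.le_ceil ((m : ℚ) / t)
    rw [div_le_iff₀ htQ] at this
    exact_mod_cast this
  have hd0 : 0 < ⌈(m : ℚ) / t⌉ := Int.ceil_pos.mpr (by positivity)
  generalize ⌈(m : ℚ) / t⌉ = d at *
  have htZ : (0 : ℤ) < t := by exact_mod_cast ht
  have hcZ : (0 : ℤ) < c := by exact_mod_cast hc
  have ham : 4 * (m : ℤ) ≤ (t + d) * (t + d) := by nlinarith [sq_nonneg ((t : ℤ) - d)]
  by_cases h : (m : ℤ) ≤ (c - 1) * c
  · have := key _ h
    have : 2 * (c : ℤ) - 1 ≤ t + d := by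
      by_contra hlt
      have : (t : ℤ) + d ≤ 2 * (c - 1) := by omega
      nlinarith
    omega
  · have := key _ hu
    have : 2 * (c : ℤ) ≤ t + d := by
      by_contra hlt
      have : (t : ℤ) + d ≤ 2 * c - 1 := by omega
      nlinarith
    omega
end

section
/- Let s be a positive integer and define C_PS(m) = min over positive integers s′ of (s′ + ⌈m/s′⌉ − 2). Then C_PS(s²) = 2s − 2 and C_PS(s(s+1)) = 2s − 1. -/
lemma ps_ceil_mul (m t : ℕ) (ht : 0 < t) : (m : ℤ) ≤ ⌈(m : ℚ) / t⌉ * t := by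
  have h := Int.le_ceil ((m : ℚ) / t)
  have ht' : (0 : ℚ) < t := by exact_mod_cast ht
  rw [div_le_iff₀ ht'] at h
  exact_mod_cast h

lemma ps_ceil_eq (a t : ℕ) (ht : 0 < t) : ⌈((t * a : ℕ) : ℚ) / t⌉ = (a : ℤ) := by
  have ht' : (t : ℚ) ≠ 0 := by exact_mod_cast ht.ne'
  have : ((t * a : ℕ) : ℚ) / t = ((a : ℤ) : ℚ) := by
    push_cast
    field_simp
  rw [this, Int.ceil_intCast]

/-- For a positive integer `s`, the minimal Paterson–Stockmeyer cost
`C_PS(m) = min_{s′ ≥ 1} (s′ + ⌈m/s′⌉ − 2)` satisfies `C_PS(s²) = 2s − 2` and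
`C_PS(s(s+1)) = 2s − 1`.  Here "the minimum equals `v`" is expressed as
`IsLeast` of the set of attained costs. -/
theorem ps_cost_optimal_degrees (s : ℕ) (hs : 0 < s) :
    IsLeast {c : ℤ | ∃ s' : ℕ, 0 < s' ∧
        c = (s' : ℤ) + ⌈((s ^ 2 : ℕ) : ℚ) / s'⌉ - 2} (2 * s - 2) ∧
    IsLeast {c : ℤ | ∃ s' : ℕ, 0 < s' ∧
        c = (s' : ℤ) + ⌈((s * (s + 1) : ℕ) : ℚ) / s'⌉ - 2} (2 * s - 1) := by
  have hs' : (0 : ℤ) < s := by exact_mod_cast hs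
  refine ⟨⟨⟨s, hs, ?_⟩, ?_⟩, ⟨⟨s, hs, ?_⟩, ?_⟩⟩
  · rw [pow_two, ps_ceil_eq s s hs]
    ring
  · rintro c ⟨t, ht, rfl⟩
    have h := ps_ceil_mul (s ^ 2) t ht
    generalize ⌈((s ^ 2 : ℕ) : ℚ) / t⌉ = k at h ⊢
    have ht' : (0 : ℤ) < t := by exact_mod_cast ht
    push_cast at h
    have hk : 0 < k := by
      by_contra hk
      nlinarith
    by_contra hc
    have h1 : (t : ℤ) + k ≤ 2 * s - 1 := by omega
    nlinarith [sq_nonneg ((t : ℤ) - k)]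
  · rw [ps_ceil_eq (s + 1) s hs]
    push_cast
    ring
  · rintro c ⟨t, ht, rfl⟩
    have h := ps_ceil_mul (s * (s + 1)) t ht
    generalize ⌈((s * (s + 1) : ℕ) : ℚ) / t⌉ = k at h ⊢
    have ht' : (0 : ℤ) < t := by exact_mod_cast ht
    push_cast at h
    have hk : 0 < k := by
      by_contra hk
      nlinarith
    by_contra hc
    have h1 : (t : ℤ) + k ≤ 2 * s := by omega
    nlinarith [sq_nonneg ((t : ℤ) - k)]
end

section
/- For every integer m ≥ 8 with m ∉ {9, 11}, there exist integers s ≥ 2 and p ≥ 0 with m = 4s + p such that s + 1 + ⌈p/s⌉ = C_PS(m) − 1, where C_PS(m) = min over positive integers s′ of (s′ + ⌈m/s′⌉ − 2). That is, the evaluation scheme z_{1ps} achieves a cost exactly one matrix product lower than the optimal Paterson–Stockmeyer cost for every such degree m. -/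
lemma z1ps_exists (m : ℕ) (hm : 8 ≤ m) (h9 : m ≠ 9) (h11 : m ≠ 11) :
    ∃ s K : ℕ, 2 ≤ s ∧ 4 * s ≤ m ∧ m ≤ K * s ∧ K * s < m + s ∧
      (s + K - 1 : ℤ) ^ 2 < 4 * m := by
  by_cases h : m < 16
  · interval_cases m
    · exact ⟨2, 4, by norm_num⟩
    · omega
    · exact ⟨2, 5, by norm_num⟩
    · omega
    · exact ⟨3, 4, by norm_num⟩
    · exact ⟨3, 5, by norm_num⟩
    · exact ⟨3, 5, by norm_num⟩
    · exact ⟨3, 5, by norm_num⟩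
  · push Not at h
    have h1 := Nat.sqrt_le m
    have h2 := Nat.sqrt_lt_self (n := m) (by omega)
    have h3 := Nat.lt_succ_sqrt m
    have h4 : 4 ≤ Nat.sqrt m := Nat.le_sqrt.2 (by omega)
    generalize Nat.sqrt m = s at *
    have h3' : m < (s + 1) * (s + 1) := h3
    by_cases ha : m = s * s
    · refine ⟨s, s, by omega, by nlinarith, by omega, by omega, ?_⟩
      subst ha; push_cast; zify at h4; nlinarith
    · by_cases hb : m ≤ (s + 1) * s
      · refine ⟨s, s + 1, by omega, by nlinarith, hb, ?_, ?_⟩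
        · have : s * s < m := by omega
          nlinarith
        · have : s * s < m := by omega
          push_cast; zify at *; nlinarith
      · refine ⟨s, s + 2, by omega, by nlinarith, by nlinarith, by nlinarith, ?_⟩
        push_cast; zify at *; nlinarith


/-- For every integer `m ≥ 8` with `m ∉ {9, 11}`, there exist integers
`s ≥ 2` and `p ≥ 0` with `m = 4s + p` such that `s + 1 + ⌈p/s⌉ = C_PS(m) − 1`,
where `C_PS(m)` is the minimum over positive integers `s′` of `s′ + ⌈m/s′⌉ − 2`
(expressed via `IsLeast`). -/
theorem z1ps_saves_one_product (m : ℕ) (hm : 8 ≤ m) (h9 : m ≠ 9) (h11 : m ≠ 11)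
    (C : ℤ)
    (hC : IsLeast {c : ℤ | ∃ s' : ℕ, 0 < s' ∧ c = (s' : ℤ) + ⌈(m : ℚ) / s'⌉ - 2} C) :
    ∃ s p : ℕ, 2 ≤ s ∧ m = 4 * s + p ∧
      (s : ℤ) + 1 + ⌈(p : ℚ) / s⌉ = C - 1 := by

  obtain ⟨s, K, hs, h4, hK1, hK2, hsq⟩ := z1ps_exists m hm h9 h11
  have hs0 : (0 : ℚ) < s := by exact_mod_cast (by omega : 0 < s)
  have hceil : ⌈(m : ℚ) / s⌉ = (K : ℤ) := by
    rw [Int.ceil_eq_iff]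
    constructor
    · rw [lt_div_iff₀ hs0]
      have : (K : ℚ) * s < m + s := by exact_mod_cast hK2
      push_cast; linarith
    · rw [div_le_iff₀ hs0]
      exact_mod_cast hK1
  refine ⟨s, m - 4 * s, hs, by omega, ?_⟩
  have hp : ((m - 4 * s : ℕ) : ℚ) / s = (m : ℚ) / s - (4 : ℤ) := by
    rw [Nat.cast_sub h4]; push_cast; field_simp
  rw [hp, Int.ceil_sub_intCast, hceil]
  have hle : C ≤ (s : ℤ) + K - 2 := hC.2 ⟨s, by omega, by rw [hceil]⟩
  obtain ⟨t, ht, hCt⟩ := hC.1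
  have ht0 : (0 : ℚ) < t := by exact_mod_cast ht
  have hk := Int.le_ceil ((m : ℚ) / t)
  have hk0 : 0 ≤ ⌈(m : ℚ) / t⌉ := Int.ceil_nonneg (by positivity)
  generalize ⌈(m : ℚ) / t⌉ = k at *
  rw [div_le_iff₀ ht0] at hk
  have hk' : (m : ℤ) ≤ k * t := by exact_mod_cast hk
  have hge : (s : ℤ) + K - 1 < t + k := by
    apply lt_of_pow_lt_pow_left₀ 2 (by positivity)
    nlinarith [sq_nonneg ((t : ℤ) - k)]
  omega
end

section
/- Let b_0, …, b_8 be real numbers with b_8 > 0 and b_7 ≠ 0. Define c_4 = √b_8, c_3 = b_7/(2c_4), de_2 = (b_6 − c_3²)/c_4, d_1 = (b_5 − c_3·de_2)/c_4, and suppose the discriminant Δ = (d_1 − (c_3/c_4)·de_2)² + 4(c_3/c_4)(b_3 + (c_3²/c_4)d_1 − (c_3/c_4)b_4) satisfies Δ ≥ 0. Define e_2 = ((c_3/c_4)·de_2 − d_1 + √Δ)·c_4/(2c_3), d_2 = de_2 − e_2, e_0 = (b_4 − c_3 d_1 − d_2 e_2)/c_4, f_2 = b_2, f_1 = b_1, f_0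 = b_0. Then for every real square matrix A, with y_{02}(A) = c_4 A⁴ + c_3 A³, the scheme y_{12}(A) = (y_{02}(A) + d_2 A² + d_1 A)(y_{02}(A) + e_2 A²) + e_0 y_{02}(A) + f_2 A² + f_1 A + f_0 I equals Σ_{i=0}^{8} b_i A^i. -/
theorem y12_expand {n : ℕ} (A : Matrix (Fin n) (Fin n) ℝ) (b : ℕ → ℝ) (c4 c3 d2 d1 e2 e0 : ℝ)
    (h8 : b 8 = c4 ^ 2) (h7 : b 7 = 2 * c4 * c3) (h6 : b 6 = c3 ^ 2 + c4 * (d2 + e2))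
    (h5 : b 5 = c3 * (d2 + e2) + d1 * c4) (h4 : b 4 = c3 * d1 + d2 * e2 + e0 * c4)
    (h3 : b 3 = d1 * e2 + e0 * c3) :
    (c4 • A ^ 4 + c3 • A ^ 3 + d2 • A ^ 2 + d1 • A) * (c4 • A ^ 4 + c3 • A ^ 3 + e2 • A ^ 2)
        + e0 • (c4 • A ^ 4 + c3 • A ^ 3) +
        b 2 • A ^ 2 + b 1 • A + b 0 • (1 : Matrix (Fin n) (Fin n) ℝ)
      = ∑ i ∈ Finset.range 9, b i • A ^ i := by
  simp only [Finset.sum_range_succ, Finset.sum_range_zero, h8, h7, h6, h5, h4, h3]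
  simp only [add_mul, mul_add, smul_mul_assoc, mul_smul_comm, ← pow_add, ← pow_succ', pow_one,
    pow_zero, Nat.reduceAdd]
  module

/-- With `b_8 > 0`, `b_7 ≠ 0`, coefficients defined by
`c_4 = √b_8`, `c_3 = b_7/(2c_4)`, `de_2 = (b_6 − c_3²)/c_4`,
`d_1 = (b_5 − c_3·de_2)/c_4`, nonnegative discriminant `Δ`, and the quadratic-root
choice `e_2 = ((c_3/c_4)·de_2 − d_1 + √Δ)·c_4/(2c_3)`, `d_2 = de_2 − e_2`,
`e_0 = (b_4 − c_3 d_1 − d_2 e_2)/c_4`, the scheme `y_{12}(A)` equals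
`Σ_{i=0}^{8} b_i A^i` for every real square matrix `A`. -/
theorem y12_real_quadratic_root (b : ℕ → ℝ) (hb8 : 0 < b 8) (hb7 : b 7 ≠ 0)
    {n : ℕ} (A : Matrix (Fin n) (Fin n) ℝ) :
    let c4 := Real.sqrt (b 8)
    let c3 := b 7 / (2 * c4)
    let de2 := (b 6 - c3 ^ 2) / c4
    let d1 := (b 5 - c3 * de2) / c4
    let Δ := (d1 - (c3 / c4) * de2) ^ 2 +
      4 * (c3 / c4) * (b 3 + (c3 ^ 2 / c4) * d1 - (c3 / c4) * b 4)
    0 ≤ Δ →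
    let e2 := ((c3 / c4) * de2 - d1 + Real.sqrt Δ) * c4 / (2 * c3)
    let d2 := de2 - e2
    let e0 := (b 4 - c3 * d1 - d2 * e2) / c4
    let y02 := c4 • A ^ 4 + c3 • A ^ 3
    (y02 + d2 • A ^ 2 + d1 • A) * (y02 + e2 • A ^ 2) + e0 • y02 +
        b 2 • A ^ 2 + b 1 • A + b 0 • (1 : Matrix (Fin n) (Fin n) ℝ)
      = ∑ i ∈ Finset.range 9, b i • A ^ i := by
  intro c4 c3 de2 d1 Δ hΔ e2 d2 e0 y02
  have hc4 : c4 ≠ 0 := (Real.sqrt_pos.mpr hb8).ne'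
  have hs4 : c4 ^ 2 = b 8 := Real.sq_sqrt hb8.le
  have hc3 : c3 ≠ 0 := div_ne_zero hb7 (mul_ne_zero two_ne_zero hc4)
  have hde : d2 + e2 = de2 := sub_add_cancel _ _
  have h7 : c3 * (2 * c4) = b 7 := div_mul_cancel₀ _ (mul_ne_zero two_ne_zero hc4)
  have h6 : de2 * c4 = b 6 - c3 ^ 2 := div_mul_cancel₀ _ hc4
  have h5 : d1 * c4 = b 5 - c3 * de2 := div_mul_cancel₀ _ hc4
  have h4 : e0 * c4 = b 4 - c3 * d1 - d2 * e2 := div_mul_cancel₀ _ hc4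
  have hd2 : d2 = de2 - e2 := rfl
  have he2 : e2 * (2 * c3) = ((c3 / c4) * de2 - d1 + Real.sqrt Δ) * c4 :=
    div_mul_cancel₀ _ (mul_ne_zero two_ne_zero hc3)
  have hsq : Real.sqrt Δ ^ 2 = (d1 - (c3 / c4) * de2) ^ 2 +
      4 * (c3 / c4) * (b 3 + (c3 ^ 2 / c4) * d1 - (c3 / c4) * b 4) := Real.sq_sqrt hΔ
  refine y12_expand A b c4 c3 d2 d1 e2 e0 hs4.symm (by linarith) (by rw [hde]; linarith)
    (by rw [hde]; linarith) (by linarith) ?_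
  clear_value e0 d2 e2
  generalize Real.sqrt Δ = s at *
  clear hΔ
  clear_value Δ d1 de2 c3 c4
  obtain ⟨r, hr⟩ : ∃ r, r = c3 / c4 := ⟨_, rfl⟩
  have hc : c3 = r * c4 := by rw [hr, div_mul_cancel₀ _ hc4]
  have hr0 : r ≠ 0 := by rw [hr]; exact div_ne_zero hc3 hc4
  have hcc : c3 ^ 2 / c4 = r * c3 := by rw [hr]; ring
  rw [hcc, ← hr] at hsq
  rw [← hr] at he2
  have he2' : s = 2 * r * e2 - r * de2 + d1 := by
    apply mul_right_cancel₀ hc4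
    rw [hc] at he2
    linear_combination -he2
  have he0 : e0 * c3 = r * (b 4 - c3 * d1 - d2 * e2) := by
    rw [← h4, hc]; ring
  rw [he0, hd2]
  rw [he2'] at hsq
  apply mul_left_cancel₀ (mul_ne_zero four_ne_zero hr0)
  linear_combination -hsq
end

section
/- Let b_0, …, b_8 be real numbers with b_8 > 0, b_7 = 0, and b_5 ≠ 0. Define c_4 = √b_8, c_3 = 0, d_1 = b_5/c_4, e_2 = b_3/d_1, d_2 = b_6/c_4 − e_2, e_0 = (b_4 − d_2 e_2)/c_4, f_2 = b_2, f_1 = b_1, f_0 = b_0. Then for every real square matrix A, with y_{02}(A) = c_4 A⁴, the scheme y_{12}(A) = (y_{02}(A) + d_2 A² + d_1 A)(y_{02}(A) + e_2 A²) + e_0 y_{02}(A) + f_2 A² + f_1 A + f_0 I equals Σ_{i=0}^{8} b_i A^i. -/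
/-- The singular case `b_7 = 0` (so `c_3 = 0`), requiring `b_5 ≠ 0`:
with `c_4 = √b_8`, `d_1 = b_5/c_4`, `e_2 = b_3/d_1`, `d_2 = b_6/c_4 − e_2`,
`e_0 = (b_4 − d_2 e_2)/c_4`, the scheme `y_{12}(A)` with `y_{02}(A) = c_4 A⁴`
equals `Σ_{i=0}^{8} b_i A^i` for every real square matrix `A`. -/
theorem y12_real_singular_case (b : ℕ → ℝ) (hb8 : 0 < b 8) (hb7 : b 7 = 0)
    (hb5 : b 5 ≠ 0) {n : ℕ} (A : Matrix (Fin n) (Fin n) ℝ) :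
    let c4 := Real.sqrt (b 8)
    let d1 := b 5 / c4
    let e2 := b 3 / d1
    let d2 := b 6 / c4 - e2
    let e0 := (b 4 - d2 * e2) / c4
    let y02 := c4 • A ^ 4
    (y02 + d2 • A ^ 2 + d1 • A) * (y02 + e2 • A ^ 2) + e0 • y02 +
        b 2 • A ^ 2 + b 1 • A + b 0 • (1 : Matrix (Fin n) (Fin n) ℝ)
      = ∑ i ∈ Finset.range 9, b i • A ^ i := by
  intro c4 d1 e2 d2 e0 y02
  have hc : c4 ≠ 0 := (Real.sqrt_pos.mpr hb8).ne'
  have hd : d1 ≠ 0 := div_ne_zero hb5 hc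
  have h8 : b 8 = c4 * c4 := (Real.mul_self_sqrt hb8.le).symm
  have h5 : b 5 = d1 * c4 := (div_mul_cancel₀ _ hc).symm
  have h3 : b 3 = e2 * d1 := (div_mul_cancel₀ _ hd).symm
  have h6 : b 6 = (d2 + e2) * c4 := by
    have : d2 + e2 = b 6 / c4 := sub_add_cancel _ _
    rw [this, div_mul_cancel₀ _ hc]
  have h4 : b 4 = e0 * c4 + d2 * e2 := by
    have : e0 * c4 = b 4 - d2 * e2 := div_mul_cancel₀ _ hc
    rw [this, sub_add_cancel]
  have hy : y02 = c4 • A ^ 4 := rfl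
  simp only [Finset.sum_range_succ, Finset.sum_range_zero]
  rw [hy, h8, hb7, h6, h5, h4, h3]
  clear_value c4 d1 e2 d2 e0 y02
  simp only [add_mul, mul_add, smul_mul_assoc, mul_smul_comm, smul_smul, ← pow_add, ← pow_succ',
    pow_zero, pow_one]
  norm_num
  module
end

section
/- Let b_0, …, b_8 be complex numbers with b_8 ≠ 0 and with b_7 ≠ 0 or b_5 ≠ 0. Then there exist complex numbers c_4, c_3, d_2, d_1, e_2, e_0, f_2, f_1, f_0 such that for every complex square matrix A, with y_{02}(A) = c_4 A⁴ + c_3 A³, the scheme y_{12}(A) = (y_{02}(A) + d_2 A² + d_1 A)(y_{02}(A) + e_2 A²) + e_0 y_{02}(A) + f_2 A² + f_1 A + f_0 I equals Σ_{i=0}^{8} b_i A^i. -/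
/-- For complex coefficients with `b_8 ≠ 0` and (`b_7 ≠ 0` or `b_5 ≠ 0`),
there exist complex scalars `c_4, c_3, d_2, d_1, e_2, e_0, f_2, f_1, f_0` such that
the three-product scheme `y_{12}(A)` equals `Σ_{i=0}^{8} b_i A^i` for every complex
square matrix `A`. -/
theorem y12_complex_exists (b : ℕ → ℂ) (hb8 : b 8 ≠ 0) (hb : b 7 ≠ 0 ∨ b 5 ≠ 0) :
    ∃ c4 c3 d2 d1 e2 e0 f2 f1 f0 : ℂ,
      ∀ (n : ℕ) (A : Matrix (Fin n) (Fin n) ℂ),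
        (c4 • A ^ 4 + c3 • A ^ 3 + d2 • A ^ 2 + d1 • A) *
            (c4 • A ^ 4 + c3 • A ^ 3 + e2 • A ^ 2) +
          e0 • (c4 • A ^ 4 + c3 • A ^ 3) + f2 • A ^ 2 + f1 • A +
          f0 • (1 : Matrix (Fin n) (Fin n) ℂ)
          = ∑ i ∈ Finset.range 9, b i • A ^ i := by
  obtain ⟨c, hc⟩ := IsAlgClosed.exists_eq_mul_self (b 8)
  have hc0 : c ≠ 0 := by
    rintro rfl
    exact hb8 (by simpa using hc)
  obtain ⟨s, hs⟩ : ∃ s : ℂ, b 7 = 2 * c * s := ⟨b 7 / (2 * c), by field_simp⟩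
  obtain ⟨u, hu⟩ : ∃ u : ℂ, b 6 = s ^ 2 + c * u := ⟨(b 6 - s ^ 2) / c, by field_simp; ring⟩
  obtain ⟨d1, hd1⟩ : ∃ d1 : ℂ, b 5 = s * u + c * d1 := ⟨(b 5 - s * u) / c, by field_simp; ring⟩
  obtain ⟨e2, he2⟩ : ∃ e2 : ℂ,
      s * e2 ^ 2 + (c * d1 - s * u) * e2 + (s * b 4 - s ^ 2 * d1 - c * b 3) = 0 := by
    by_cases hs0 : s = 0
    · subst hs0
      have h5 : b 5 ≠ 0 := by
        rcases hb with h | h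
        · exact absurd (by simpa using hs) h
        · exact h
      have hd : d1 ≠ 0 := by
        rintro rfl
        exact h5 (by simpa using hd1)
      exact ⟨b 3 / d1, by field_simp; ring⟩
    · obtain ⟨r, hr⟩ := IsAlgClosed.exists_eq_mul_self
        ((c * d1 - s * u) ^ 2 - 4 * s * (s * b 4 - s ^ 2 * d1 - c * b 3))
      refine ⟨(r - (c * d1 - s * u)) / (2 * s), ?_⟩
      field_simp
      linear_combination -hr
  obtain ⟨e0, he0⟩ : ∃ e0 : ℂ, b 4 = (u - e2) * e2 + s * d1 + c * e0 :=
    ⟨(b 4 - (u - e2) * e2 - s * d1) / c, by field_simp; ring⟩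
  have h3 : b 3 = d1 * e2 + s * e0 := by
    apply mul_left_cancel₀ hc0
    linear_combination -he2 + s * he0
  refine ⟨c, s, u - e2, d1, e2, e0, b 2, b 1, b 0, fun n A => ?_⟩
  simp only [Finset.sum_range_succ, Finset.sum_range_zero, hc, hs, hu, hd1, he0, h3, zero_add,
    pow_zero, pow_one, add_mul, mul_add, smul_mul_smul_comm, ← pow_add, ← pow_succ, ← pow_succ']
  norm_num only
  module
end

section
/- Let R be a commutative ring, let A be an n×n matrix over R, let m = 4s + p with integers s ≥ 2 and p ≥ 0, write p = t·s + r with t = ⌊p/s⌋ and r = p mod s (so s > r ≥ 0), and let b_0, …, b_m ∈ R. Suppose Y is an n×n matrix over R satisfying Y = Σ_{i=0}^{4s} b_{p+i} A^i. Then the nested scheme z_{1ps}(A) = (⋯((Y·A^s + Σ_{i=1}^{s} b_{p−i} A^{s−i})·A^s + Σ_{i=1}^{s} b_{p−s−i} A^{s−i})·A^s + ⋯ + Σ_{i=1}^{s} b_{p−(t−1)s−i} A^{s−i})·A^r + Σ_{j=0}^{r−1} b_j A^j, in which the multiplication by A^s is applied t times followed by one multiplication by A^r (omitted when r = 0), satisfies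 z_{1ps}(A) = Σ_{i=0}^{m} b_i A^i. -/
/-- The outer nesting of the `z_{1ps}` scheme: `zNest A b p s Y ℓ` is the value after
`ℓ` multiplications by `A^s`, starting from the inner evaluation `Y`; each level adds
`Σ_{i=1}^{s} b_{p − ℓs − i} A^{s−i}` after multiplying by `A^s`. -/
def zNest {R : Type*} [CommRing R] {n : ℕ} (A : Matrix (Fin n) (Fin n) R)
    (b : ℕ → R) (p s : ℕ) (Y : Matrix (Fin n) (Fin n) R) :
    ℕ → Matrix (Fin n) (Fin n) R
  | 0 => Y
  | ℓ + 1 => zNest A b p s Y ℓ * A ^ s +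
      ∑ i ∈ Finset.Icc 1 s, b (p - ℓ * s - i) • A ^ (s - i)

theorem shift_step {R : Type*} [CommRing R] {n : ℕ} (A : Matrix (Fin n) (Fin n) R)
    (b : ℕ → R) (q s N : ℕ) :
    (∑ i ∈ Finset.range N, b (q + s + i) • A ^ i) * A ^ s +
      ∑ i ∈ Finset.range s, b (q + i) • A ^ i =
      ∑ i ∈ Finset.range (s + N), b (q + i) • A ^ i := by
  rw [Finset.sum_range_add, add_comm, Finset.sum_mul]
  congr 1
  refine Finset.sum_congr rfl fun i _ => ?_
  rw [smul_mul_assoc, ← pow_add, add_assoc, add_comm i s]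

theorem block_eq {R : Type*} [CommRing R] {n : ℕ} (A : Matrix (Fin n) (Fin n) R)
    (b : ℕ → R) (q s : ℕ) :
    ∑ i ∈ Finset.Icc 1 s, b (q + s - i) • A ^ (s - i) =
      ∑ i ∈ Finset.range s, b (q + i) • A ^ i := by
  refine Finset.sum_bij' (fun i _ => s - i) (fun i _ => s - i) ?_ ?_ ?_ ?_ ?_
  · intro i hi
    simp only [Finset.mem_Icc, Finset.mem_range] at *
    omega
  · intro i hi
    simp only [Finset.mem_Icc, Finset.mem_range] at *
    omega
  · intro i hi
    simp only [Finset.mem_Icc] at *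
    omega
  · intro i hi
    simp only [Finset.mem_range] at *
    omega
  · intro i hi
    simp only [Finset.mem_Icc] at hi
    rw [Nat.add_sub_assoc hi.2]

theorem zNest_eq {R : Type*} [CommRing R] {n : ℕ} (A : Matrix (Fin n) (Fin n) R)
    (b : ℕ → R) (s N : ℕ) (l : ℕ) : ∀ q p : ℕ, p = q + l * s →
    zNest A b p s (∑ i ∈ Finset.range N, b (p + i) • A ^ i) l =
      ∑ i ∈ Finset.range (l * s + N), b (q + i) • A ^ i := by
  induction l with
  | zero =>
    intro q p h
    simp [zNest, h]
  | succ l ih =>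
    intro q p h
    have h' : p = (q + s) + l * s := by rw [h]; ring
    have h2 : p - l * s = q + s := by omega
    rw [zNest, ih (q + s) p h', h2, block_eq, shift_step]
    congr 2
    ring

/-- Let `m = 4s + p` with `s ≥ 2`, `p ≥ 0`, `t = ⌊p/s⌋`, `r = p mod s`.
If `Y = Σ_{i=0}^{4s} b_{p+i} A^i` (a correct inner evaluation of the top block), then
the outer nesting scheme — `t` multiplications by `A^s` interleaved with the blocks
`Σ_{i=1}^{s} b_{p−ℓs−i} A^{s−i}`, a final multiplication by `A^r` (trivial when
`r = 0`), and the remainder block `Σ_{j=0}^{r−1} b_j A^j` — equals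
`Σ_{i=0}^{m} b_i A^i`. -/
theorem z1ps_correct {R : Type*} [CommRing R] {n : ℕ}
    (A : Matrix (Fin n) (Fin n) R) (m s p : ℕ) (hs : 2 ≤ s) (hm : m = 4 * s + p)
    (b : ℕ → R) (Y : Matrix (Fin n) (Fin n) R)
    (hY : Y = ∑ i ∈ Finset.range (4 * s + 1), b (p + i) • A ^ i) :
    zNest A b p s Y (p / s) * A ^ (p % s) +
        ∑ j ∈ Finset.range (p % s), b j • A ^ j
      = ∑ i ∈ Finset.range (m + 1), b i • A ^ i := by
  subst hY hm
  have hp : p = p % s + p / s * s := by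
    rw [mul_comm]; exact (Nat.mod_add_div p s).symm
  rw [zNest_eq A b s (4 * s + 1) (p / s) (p % s) p hp]
  have h := shift_step A b 0 (p % s) (p / s * s + (4 * s + 1))
  simp only [zero_add] at h
  rw [h]
  congr 2
  omega
end
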